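/- Let 1 ≤ d < r and consider the class 𝒮 of representations M of Γ_r satisfying Soc_U(M) = M₂ for all U ∈ Gr_{d,r}, and the class ℛ of representations M satisfying Rad_U(M) = M₂ for all U ∈ Gr_{d,r}. Then: (a) 𝒮 is closed under subrepresentations and under extensions (if 0 → A → B → C → 0 is a short exact sequence of representations with A, C ∈ 𝒮, then B ∈ 𝒮); (b) ℛ is closed under quotient representations and under extensions. -/

import Mathlib

open Module LinearMap

universe u

/-- A finite-dimensional representation of the `r`-Kronecker quiver `Γ_r` over `k`:
two finite-dimensional `k`-vector spaces `M₁`, `M₂` and `r` linear maps `M₁ → M₂`. -/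
structure KRep (k : Type u) [Field k] (r : ℕ) : Type (u + 1) where
  V1 : Type u
  V2 : Type u
  [addV1 : AddCommGroup V1]
  [addV2 : AddCommGroup V2]
  [modV1 : Module k V1]
  [modV2 : Module k V2]
  [finV1 : FiniteDimensional k V1]
  [finV2 : FiniteDimensional k V2]
  f : Fin r → V1 →ₗ[k] V2

attribute [instance] KRep.addV1 KRep.addV2 KRep.modV1 KRep.modV2 KRep.finV1 KRep.finV2

variable {k : Type u} [Field k] {r : ℕ}

/-- For `α ∈ k^r`, the operator `x^M_α = ∑ i, αᵢ • M(γᵢ) : M₁ → M₂`. -/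
def KRep.x (M : KRep k r) (α : Fin r → k) : M.V1 →ₗ[k] M.V2 :=
  ∑ i, α i • M.f i

/-- The space `Hom(M, N)` of morphisms of representations, as a `k`-submodule of the
pairs of linear maps `(f₁ : M₁ → N₁, f₂ : M₂ → N₂)`; membership is the condition
`f₂ ∘ M(γᵢ) = N(γᵢ) ∘ f₁` for all `i`. -/
def KHom (M N : KRep k r) : Submodule k ((M.V1 →ₗ[k] N.V1) × (M.V2 →ₗ[k] N.V2)) where
  carrier := {p | ∀ i, p.2 ∘ₗ M.f i = N.f i ∘ₗ p.1}
  add_mem' := by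
    intro a b ha hb i
    simp only [Prod.snd_add, Prod.fst_add, LinearMap.add_comp, LinearMap.comp_add, ha i, hb i]
  zero_mem' := by intro i; simp
  smul_mem' := by
    intro c a ha i
    simp only [Prod.smul_snd, Prod.smul_fst, LinearMap.smul_comp, LinearMap.comp_smul, ha i]

/-- The representation `X_U` attached to a subspace `U ⊆ k^r`:
`(X_U)₁ = k`, `(X_U)₂ = k^r/U`, and `X_U(γᵢ)(c) = c · (eᵢ + U)`. -/
def XU (U : Submodule k (Fin r → k)) : KRep k r where
  V1 := k
  V2 := (Fin r → k) ⧸ U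
  f := fun i => LinearMap.toSpanSingleton k _ (Submodule.Quotient.mk (Pi.single i 1))

/-- The `M₁`-part of the socle: `{m ∈ M₁ : x^M_u(m) = 0 for all u ∈ U}`. -/
def KRep.socKer (M : KRep k r) (U : Submodule k (Fin r → k)) : Submodule k M.V1 :=
  ⨅ u ∈ U, LinearMap.ker (M.x u)

/-- `Soc_U(M) = {m ∈ M₁ : x^M_u(m) = 0 ∀ u ∈ U} ⊕ M₂`, as a subspace of `M₁ ⊕ M₂`. -/
def KRep.soc (M : KRep k r) (U : Submodule k (Fin r → k)) : Submodule k (M.V1 × M.V2) :=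
  (M.socKer U).prod ⊤

/-- `Rad_U(M) = ∑_{u ∈ U} x^M_u(M₁) ⊆ M₂`. -/
def KRep.rad (M : KRep k r) (U : Submodule k (Fin r → k)) : Submodule k M.V2 :=
  ⨆ u ∈ U, LinearMap.range (M.x u)

/-- Direct sum of two representations. -/
def KRep.sum (M N : KRep k r) : KRep k r where
  V1 := M.V1 × N.V1
  V2 := M.V2 × N.V2
  f := fun i => (M.f i).prodMap (N.f i)

/-- Isomorphism of representations. -/
def KIso (M N : KRep k r) : Prop :=
  ∃ (e1 : M.V1 ≃ₗ[k] N.V1) (e2 : M.V2 ≃ₗ[k] N.V2),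
    ∀ i, (e2 : M.V2 →ₗ[k] N.V2) ∘ₗ M.f i = N.f i ∘ₗ (e1 : M.V1 →ₗ[k] N.V1)

/-- A representation is nonzero if its dimension vector is not `(0,0)`. -/
def KRep.Nonzero (M : KRep k r) : Prop :=
  finrank k M.V1 ≠ 0 ∨ finrank k M.V2 ≠ 0

/-- A representation is indecomposable if it is nonzero and not isomorphic to a direct
sum of two nonzero representations. -/
def KRep.Indecomposable (M : KRep k r) : Prop :=
  M.Nonzero ∧ ∀ A B : KRep k r, A.Nonzero → B.Nonzero → ¬ KIso M (A.sum B)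

/-- A representation is simple if its dimension vector is `(1,0)` or `(0,1)`. -/
def KRep.IsSimple (M : KRep k r) : Prop :=
  (finrank k M.V1 = 1 ∧ finrank k M.V2 = 0) ∨ (finrank k M.V1 = 0 ∧ finrank k M.V2 = 1)

/-- `M` has constant `d`-socle rank: `dim_k Soc_U(M)` is independent of `U ∈ Gr_{d,r}`. -/
def KRep.ConstSocRank (d : ℕ) (M : KRep k r) : Prop :=
  ∃ c : ℕ, ∀ U : Submodule k (Fin r → k), finrank k U = d → finrank k (M.soc U) = c

/-- `M` has the equal `d`-socle property: `Soc_U(M)` is independent of `U ∈ Gr_{d,r}`. -/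
def KRep.ESP (d : ℕ) (M : KRep k r) : Prop :=
  ∀ U V : Submodule k (Fin r → k), finrank k U = d → finrank k V = d → M.soc U = M.soc V

/-- `M` has constant `d`-radical rank: `dim_k Rad_U(M)` is independent of `U ∈ Gr_{d,r}`. -/
def KRep.ConstRadRank (d : ℕ) (M : KRep k r) : Prop :=
  ∃ c : ℕ, ∀ U : Submodule k (Fin r → k), finrank k U = d → finrank k (M.rad U) = c

/-- `M` has the equal `d`-radical property: `Rad_U(M)` is independent of `U ∈ Gr_{d,r}`. -/
def KRep.ERP (d : ℕ) (M : KRep k r) : Prop :=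
  ∀ U V : Submodule k (Fin r → k), finrank k U = d → finrank k V = d → M.rad U = M.rad V

/-- The subrepresentation of `M` given by compatible subspaces `W₁ ⊆ M₁`, `W₂ ⊆ M₂`,
viewed as a representation. -/
def KRep.subRep (M : KRep k r) (W1 : Submodule k M.V1) (W2 : Submodule k M.V2)
    (h : ∀ i, W1 ≤ W2.comap (M.f i)) : KRep k r where
  V1 := W1
  V2 := W2
  f := fun i => (M.f i).restrict (fun _ hx => h i hx)

/-- The quotient representation `M/W` for compatible subspaces `W₁ ⊆ M₁`, `W₂ ⊆ M₂`. -/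
def KRep.quotRep (M : KRep k r) (W1 : Submodule k M.V1) (W2 : Submodule k M.V2)
    (h : ∀ i, W1 ≤ W2.comap (M.f i)) : KRep k r where
  V1 := M.V1 ⧸ W1
  V2 := M.V2 ⧸ W2
  f := fun i => Submodule.mapQ W1 W2 (M.f i) (h i)

/-- A short exact sequence `0 → A → B → C → 0` of representations of `Γ_r`, exact on
both components. -/
def KShortExact (A B C : KRep k r)
    (g : (A.V1 →ₗ[k] B.V1) × (A.V2 →ₗ[k] B.V2))
    (h : (B.V1 →ₗ[k] C.V1) × (B.V2 →ₗ[k] C.V2)) : Prop :=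
  g ∈ KHom A B ∧ h ∈ KHom B C ∧
  Function.Injective g.1 ∧ Function.Injective g.2 ∧
  Function.Surjective h.1 ∧ Function.Surjective h.2 ∧
  LinearMap.ker h.1 = LinearMap.range g.1 ∧ LinearMap.ker h.2 = LinearMap.range g.2

/-- Membership in the class `𝒮`: `Soc_U(M) = M₂` for all `U ∈ Gr_{d,r}`. -/
def memS (d : ℕ) (M : KRep k r) : Prop :=
  ∀ U : Submodule k (Fin r → k), finrank k U = d →
    M.soc U = (⊥ : Submodule k M.V1).prod ⊤

/-- Membership in the class `ℛ`: `Rad_U(M) = M₂` for all `U ∈ Gr_{d,r}`. -/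
def memR (d : ℕ) (M : KRep k r) : Prop :=
  ∀ U : Submodule k (Fin r → k), finrank k U = d → M.rad U = ⊤

/-!
A morphism `p` intertwines the operators `x_α`, so `p.1` carries the socle kernel of the source into
that of the target, and `p.2` does the same for radicals. For each fixed `U`, the socle kernel is a
left exact functor and `M ↦ M₂ / Rad_U(M)` a right exact one; their vanishing is therefore
inherited by subobjects, respectively quotients, and by extensions. The two halves are dual.
-/

theorem KRep.soc_eq_bot_prod_top_iff (M : KRep k r) (U : Submodule k (Fin r → k)) :
    M.soc U = (⊥ : Submodule k M.V1).prod ⊤ ↔ M.socKer U = ⊥ := by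
  refine ⟨fun h => ?_, fun h => by rw [KRep.soc, h]⟩
  simpa only [KRep.soc, Submodule.prod_map_fst] using congrArg (Submodule.map (fst k M.V1 M.V2)) h

theorem memS_iff_socKer_eq_bot {d : ℕ} {M : KRep k r} :
    memS d M ↔ ∀ U : Submodule k (Fin r → k), finrank k U = d → M.socKer U = ⊥ :=
  forall₂_congr fun U _ => M.soc_eq_bot_prod_top_iff U

theorem KRep.subtype_mem_kHom (M : KRep k r) (W1 : Submodule k M.V1) (W2 : Submodule k M.V2)
    (h : ∀ i, W1 ≤ W2.comap (M.f i)) :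
    (W1.subtype, W2.subtype) ∈ KHom (M.subRep W1 W2 h) M :=
  fun _ => rfl

theorem KRep.mkQ_mem_kHom (M : KRep k r) (W1 : Submodule k M.V1) (W2 : Submodule k M.V2)
    (h : ∀ i, W1 ≤ W2.comap (M.f i)) :
    (W1.mkQ, W2.mkQ) ∈ KHom M (M.quotRep W1 W2 h) :=
  fun _ => rfl

namespace KHom

variable {M N : KRep k r} {p : (M.V1 →ₗ[k] N.V1) × (M.V2 →ₗ[k] N.V2)}

theorem comp_x (hp : p ∈ KHom M N) (α : Fin r → k) : p.2 ∘ₗ M.x α = N.x α ∘ₗ p.1 := by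
  have hpf (i : Fin r) (m : M.V1) : p.2 (M.f i m) = N.f i (p.1 m) :=
    LinearMap.congr_fun (hp i) m
  ext m
  simp only [KRep.x, comp_apply, LinearMap.sum_apply, LinearMap.smul_apply, map_sum,
    map_smul, hpf]

theorem comap_socKer_eq_iInf (hp : p ∈ KHom M N) (U : Submodule k (Fin r → k)) :
    (N.socKer U).comap p.1 = ⨅ u ∈ U, (ker p.2).comap (M.x u) := by
  simp only [KRep.socKer, Submodule.comap_iInf, ← ker_comp, comp_x hp]

theorem socKer_le_comap (hp : p ∈ KHom M N) (U : Submodule k (Fin r → k)) :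
    M.socKer U ≤ (N.socKer U).comap p.1 := by
  rw [comap_socKer_eq_iInf hp]
  exact iInf₂_mono fun u _ => ker_le_comap (M.x u)

theorem comap_socKer_of_injective (hp : p ∈ KHom M N) (hinj : Function.Injective p.2)
    (U : Submodule k (Fin r → k)) : (N.socKer U).comap p.1 = M.socKer U := by
  simp only [comap_socKer_eq_iInf hp, ker_eq_bot.2 hinj, Submodule.comap_bot]
  rfl

theorem map_rad_eq_iSup (hp : p ∈ KHom M N) (U : Submodule k (Fin r → k)) :
    (M.rad U).map p.2 = ⨆ u ∈ U, (range p.1).map (N.x u) := by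
  simp only [KRep.rad, Submodule.map_iSup, ← range_comp, comp_x hp]

theorem map_rad_le (hp : p ∈ KHom M N) (U : Submodule k (Fin r → k)) :
    (M.rad U).map p.2 ≤ N.rad U := by
  rw [map_rad_eq_iSup hp]
  exact iSup₂_mono fun u _ => map_le_range

theorem map_rad_of_surjective (hp : p ∈ KHom M N) (hsurj : Function.Surjective p.1)
    (U : Submodule k (Fin r → k)) : (M.rad U).map p.2 = N.rad U := by
  simp only [map_rad_eq_iSup hp, range_eq_top.2 hsurj, Submodule.map_top]
  rfl

theorem socKer_eq_bot_of_injective (hp : p ∈ KHom M N) (hinj : Function.Injective p.1)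
    {U : Submodule k (Fin r → k)} (hN : N.socKer U = ⊥) : M.socKer U = ⊥ := by
  have hle := socKer_le_comap hp U
  rwa [hN, Submodule.comap_bot, ker_eq_bot.2 hinj, le_bot_iff] at hle

theorem rad_eq_top_of_surjective (hp : p ∈ KHom M N) (hsurj : Function.Surjective p.2)
    {U : Submodule k (Fin r → k)} (hM : M.rad U = ⊤) : N.rad U = ⊤ := by
  have hle := map_rad_le hp U
  rwa [hM, Submodule.map_top, range_eq_top.2 hsurj, top_le_iff] at hle

variable {A B C : KRep k r} {g : (A.V1 →ₗ[k] B.V1) × (A.V2 →ₗ[k] B.V2)}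
  {h : (B.V1 →ₗ[k] C.V1) × (B.V2 →ₗ[k] C.V2)} {U : Submodule k (Fin r → k)}

theorem socKer_eq_bot_of_exact (hg : g ∈ KHom A B) (hh : h ∈ KHom B C)
    (hinj : Function.Injective g.2) (hexact : ker h.1 ≤ range g.1)
    (hA : A.socKer U = ⊥) (hC : C.socKer U = ⊥) : B.socKer U = ⊥ := by
  have hker : B.socKer U ≤ ker h.1 := by
    simpa only [hC, Submodule.comap_bot] using socKer_le_comap hh U
  calc
    B.socKer U = ((B.socKer U).comap g.1).map g.1 :=
      (Submodule.map_comap_eq_self (hker.trans hexact)).symm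
    _ = ⊥ := by rw [comap_socKer_of_injective hg hinj, hA, Submodule.map_bot]

theorem rad_eq_top_of_exact (hg : g ∈ KHom A B) (hh : h ∈ KHom B C)
    (hsurj : Function.Surjective h.1) (hexact : ker h.2 ≤ range g.2)
    (hA : A.rad U = ⊤) (hC : C.rad U = ⊤) : B.rad U = ⊤ := by
  have hrange : range g.2 ≤ B.rad U := by
    simpa only [hA, Submodule.map_top] using map_rad_le hg U
  calc
    B.rad U = ((B.rad U).map h.2).comap h.2 :=
      (Submodule.comap_map_eq_self (hexact.trans hrange)).symm
    _ = ⊤ := by rw [map_rad_of_surjective hh hsurj, hC, Submodule.comap_top]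

end KHom

section Closure

variable {d : ℕ} {A B C M : KRep k r} {W1 : Submodule k M.V1} {W2 : Submodule k M.V2}
  {g : (A.V1 →ₗ[k] B.V1) × (A.V2 →ₗ[k] B.V2)} {h : (B.V1 →ₗ[k] C.V1) × (B.V2 →ₗ[k] C.V2)}

theorem memS.subRep (hM : memS d M) (hW : ∀ i, W1 ≤ W2.comap (M.f i)) :
    memS d (M.subRep W1 W2 hW) :=
  memS_iff_socKer_eq_bot.2 fun U hU =>
    KHom.socKer_eq_bot_of_injective (M.subtype_mem_kHom W1 W2 hW) W1.subtype_injective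
      (memS_iff_socKer_eq_bot.1 hM U hU)

theorem memR.quotRep (hM : memR d M) (hW : ∀ i, W1 ≤ W2.comap (M.f i)) :
    memR d (M.quotRep W1 W2 hW) :=
  fun U hU =>
    KHom.rad_eq_top_of_surjective (M.mkQ_mem_kHom W1 W2 hW) W2.mkQ_surjective (hM U hU)

theorem memS.of_shortExact (hA : memS d A) (hC : memS d C) (hABC : KShortExact A B C g h) :
    memS d B := by
  rw [memS_iff_socKer_eq_bot] at hA hC ⊢
  obtain ⟨hg, hh, -, hinj, -, -, hexact, -⟩ := hABC
  exact fun U hU => KHom.socKer_eq_bot_of_exact hg hh hinj hexact.le (hA U hU) (hC U hU)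

theorem memR.of_shortExact (hA : memR d A) (hC : memR d C) (hABC : KShortExact A B C g h) :
    memR d B := by
  obtain ⟨hg, hh, -, -, hsurj, -, -, hexact⟩ := hABC
  exact fun U hU => KHom.rad_eq_top_of_exact hg hh hsurj hexact.le (hA U hU) (hC U hU)

end Closure

/-- Let `1 ≤ d < r`. (a) The class `𝒮` of representations `M` with
`Soc_U(M) = M₂` for all `U ∈ Gr_{d,r}` is closed under subrepresentations and
extensions; (b) the class `ℛ` of representations with `Rad_U(M) = M₂` for all
`U ∈ Gr_{d,r}` is closed under quotient representations and extensions. -/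
theorem S_and_R_closed (d : ℕ) (hd : 1 ≤ d) (hdr : d < r) :
    (∀ (M : KRep k r) (W1 : Submodule k M.V1) (W2 : Submodule k M.V2)
      (h : ∀ i, W1 ≤ W2.comap (M.f i)), memS d M → memS d (M.subRep W1 W2 h)) ∧
    (∀ (A B C : KRep k r) g h, KShortExact A B C g h →
      memS d A → memS d C → memS d B) ∧
    (∀ (M : KRep k r) (W1 : Submodule k M.V1) (W2 : Submodule k M.V2)
      (h : ∀ i, W1 ≤ W2.comap (M.f i)), memR d M → memR d (M.quotRep W1 W2 h)) ∧
    (∀ (A B C : KRep k r) g h, KShortExact A B C g h →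
      memR d A → memR d C → memR d B) :=
  ⟨fun _ _ _ hW hM => hM.subRep hW,
    fun _ _ _ _ _ hABC hA hC => hA.of_shortExact hC hABC,
    fun _ _ _ hW hM => hM.quotRep hW,
    fun _ _ _ _ _ hABC hA hC => hA.of_shortExact hC hABC⟩
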